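/- Let n, m ≥ 4 be integers and let G = P_n □ P_m be the grid. If k is an integer such that 6 ≤ k ≤ 2·max{n, m} − 1, then nm − k ∈ S_SC(G). Moreover, if m = 4 (or n = 4), then also nm − 5 ∈ S_SC(G). -/

import Mathlib

/-!  Common definitions: oriented graphs, geodesic convexity, convexity number,
strong convexity spectrum, and grid graphs. -/

variable {V : Type*}

/-- A directed walk of length `k` from `u` to `v` along the arc relation `A`,
encoded by the function `f` listing its vertices. -/
def IsDirWalk (A : V → V → Prop) (k : ℕ) (f : ℕ → V) (u v : V) : Prop :=
  f 0 = u ∧ f k = v ∧ ∀ i, i < k → A (f i) (f (i + 1))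

/-- There is a directed walk from `u` to `v`. -/
def DirReachable (A : V → V → Prop) (u v : V) : Prop :=
  ∃ k f, IsDirWalk A k f u v

/-- A digraph (given by its arc relation) is strongly connected. -/
def StrongConnected (A : V → V → Prop) : Prop :=
  ∀ u v : V, DirReachable A u v

/-- A `uv`-geodesic: a directed walk from `u` to `v` of minimum possible length
(such a walk is automatically a directed path). -/
def IsGeodesic (A : V → V → Prop) (k : ℕ) (f : ℕ → V) (u v : V) : Prop :=
  IsDirWalk A k f u v ∧ ∀ k' f', IsDirWalk A k' f' u v → k ≤ k'

/-- A nonempty vertex set `C` is convex if every vertex lying on a geodesic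
between two vertices of `C` (in either direction) belongs to `C`. -/
def DConvex (A : V → V → Prop) (C : Set V) : Prop :=
  C.Nonempty ∧ ∀ u ∈ C, ∀ v ∈ C, ∀ k f, IsGeodesic A k f u v → ∀ i ≤ k, f i ∈ C

/-- `A` is an orientation of the simple graph `G`: every arc is along an edge,
every edge gets an arc, and no edge gets both directions. -/
def IsOrientation (G : SimpleGraph V) (A : V → V → Prop) : Prop :=
  (∀ x y, A x y → G.Adj x y) ∧ (∀ x y, G.Adj x y → A x y ∨ A y x) ∧
    (∀ x y, A x y → ¬ A y x)

/-- The convexity number of a digraph: the maximum cardinality of a proper convex set. -/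
noncomputable def convexityNumber [Fintype V] (A : V → V → Prop) : ℕ :=
  sSup {k | ∃ C : Set V, DConvex A C ∧ C ≠ Set.univ ∧ C.ncard = k}

/-- The strong convexity spectrum of a graph: the set of convexity numbers of
its strongly connected orientations. -/
def strongConvexitySpectrum [Fintype V] (G : SimpleGraph V) : Set ℕ :=
  {k | ∃ A : V → V → Prop, IsOrientation G A ∧ StrongConnected A ∧ convexityNumber A = k}

/-- The grid graph `P_n □ P_m`. -/
def gridGraph (n m : ℕ) : SimpleGraph (Fin n × Fin m) :=
  (SimpleGraph.pathGraph n).boxProd (SimpleGraph.pathGraph m)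

/-!
For a set `S` of `k` vertices of the grid, consider an orientation in which the complement of `S` is
convex, while a convex set that meets `S` is either the whole grid or has at most `nm - k` elements;
then the convexity number is `nm - k`. The complement of `S` is convex when every walk through `S`
can be replaced by one outside `S` that is shorter, and this is arranged by making all entries of
`S` far from its exits. Conversely, a convex set with vertices inside and outside `S` has to pass
through the entries; from there it reaches the vertices `(0, 0)` and `(n - 1, m - 1)`, and since
most other vertices lie on a walk between these two whose length is their grid distance, it swallows
everything. The set `S` is a block of two partial rows in a corner of the grid for `k < m`, a
staircase for `m ≤ k < 2 * m`, and, when `n = 4` leaves no room for the staircase with `2 * m - 1`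
vertices, the union of the first row, the first column and most of the second row.
-/

/-! ### Directed walks and convex sets -/

section Digraph

variable {A : V → V → Prop} {u v w : V} {k l : ℕ} {f : ℕ → V} {T : Set V}

/-- The vertices `u` and `v` are joined by a directed walk of length `k` from `u` to `v`; this is
`IsDirWalk` without a named vertex sequence, so that walks can be concatenated freely. -/
def HasDirWalk (A : V → V → Prop) (k : ℕ) (u v : V) : Prop :=
  ∃ f, IsDirWalk A k f u v

theorem hasDirWalk_zero_iff : HasDirWalk A 0 u v ↔ u = v :=
  ⟨fun ⟨_, h0, hk, _⟩ => h0.symm.trans hk, fun h => ⟨fun _ => u, rfl, h, by simp⟩⟩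

theorem hasDirWalk_succ_iff :
    HasDirWalk A (k + 1) u w ↔ ∃ v, HasDirWalk A k u v ∧ A v w := by
  constructor
  · rintro ⟨f, h0, hk, hf⟩
    exact ⟨f k, ⟨f, h0, rfl, fun i hi => hf i (by lia)⟩, hk ▸ hf k (by lia)⟩
  · rintro ⟨v, ⟨f, h0, hk, hf⟩, hvw⟩
    refine ⟨Function.update f (k + 1) w, by simp [h0], by simp, fun i hi => ?_⟩
    rw [Function.update_of_ne (by lia)]
    rcases Nat.lt_succ_iff_lt_or_eq.mp hi with hik | rfl
    · rw [Function.update_of_ne (by lia)]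
      exact hf i hik
    · rwa [Function.update_self, hk]

theorem hasDirWalk_of_forall_arc (f : ℕ → V) (hf : ∀ i < k, A (f i) (f (i + 1))) :
    HasDirWalk A k (f 0) (f k) :=
  ⟨f, rfl, rfl, hf⟩

theorem hasDirWalk_one (h : A u v) : HasDirWalk A 1 u v :=
  hasDirWalk_succ_iff.mpr ⟨u, hasDirWalk_zero_iff.mpr rfl, h⟩

theorem IsDirWalk.append {g : ℕ → V} (hf : IsDirWalk A k f u v) (hg : IsDirWalk A l g v w) :
    IsDirWalk A (k + l) (fun i => if i ≤ k then f i else g (i - k)) u w := by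
  obtain ⟨hf0, hfk, hf⟩ := hf
  obtain ⟨hg0, hgl, hg⟩ := hg
  refine ⟨by simpa using hf0, ?_, fun i hi => ?_⟩
  · rcases l.eq_zero_or_pos with rfl | hl
    · simp [hfk, ← hg0, hgl]
    · simp [hl.ne', hgl]
  · rcases lt_trichotomy i k with hik | rfl | hik
    · simpa [hik.le, Nat.succ_le_iff.mpr hik] using hf i hik
    · simpa [hfk, ← hg0] using hg 0 (by lia)
    · simpa [hik.not_ge, (hik.trans i.lt_succ_self).not_ge, Nat.succ_sub hik.le]
        using hg (i - k) (by lia)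

theorem HasDirWalk.trans (h₁ : HasDirWalk A k u v) (h₂ : HasDirWalk A l v w) :
    HasDirWalk A (k + l) u w :=
  let ⟨_, hf⟩ := h₁
  let ⟨_, hg⟩ := h₂
  ⟨_, hf.append hg⟩

theorem HasDirWalk.dirReachable (h : HasDirWalk A k u v) : DirReachable A u v :=
  ⟨k, h⟩

theorem DirReachable.trans (h₁ : DirReachable A u v) (h₂ : DirReachable A v w) :
    DirReachable A u w :=
  let ⟨_, h₁⟩ := h₁
  let ⟨_, h₂⟩ := h₂
  (HasDirWalk.trans h₁ h₂).dirReachable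

theorem HasDirWalk.le_add_of_lipschitz (hw : HasDirWalk A k u v) (h : V → ℕ)
    (hlip : ∀ x y, A x y → h y ≤ h x + 1) : h v ≤ h u + k := by
  induction k generalizing v with
  | zero => simp [hasDirWalk_zero_iff.mp hw]
  | succ k ih =>
    obtain ⟨x, hx, hxv⟩ := hasDirWalk_succ_iff.mp hw
    have := ih hx
    have := hlip x v hxv
    lia

theorem IsDirWalk.hasDirWalk_segment (hf : IsDirWalk A k f u v) {p q : ℕ} (hpq : p ≤ q)
    (hqk : q ≤ k) : HasDirWalk A (q - p) (f p) (f q) := by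
  have h := hasDirWalk_of_forall_arc (A := A) (k := q - p) (fun i => f (p + i))
    fun i hi => hf.2.2 (p + i) (by lia)
  rwa [Nat.add_sub_cancel' hpq] at h

theorem IsGeodesic.sub_le_of_hasDirWalk (hg : IsGeodesic A k f u v) {p q : ℕ} (hpq : p ≤ q)
    (hqk : q ≤ k) (h : HasDirWalk A l (f p) (f q)) : q - p ≤ l := by
  have hup : HasDirWalk A (p - 0) u (f p) :=
    hg.1.1 ▸ hg.1.hasDirWalk_segment p.zero_le (hpq.trans hqk)
  have hqv : HasDirWalk A (k - q) (f q) v := by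
    have hqk' := hg.1.hasDirWalk_segment hqk le_rfl
    rwa [hg.1.2.1] at hqk'
  obtain ⟨f', hf'⟩ := (hup.trans h).trans hqv
  have := hg.2 _ f' hf'
  lia

theorem DirReachable.exists_isGeodesic (h : DirReachable A u v) :
    ∃ k f, IsGeodesic A k f u v := by
  classical
  obtain ⟨f, hf⟩ := Nat.find_spec h
  exact ⟨Nat.find h, f, hf, fun _ f' h' => Nat.find_min' h ⟨f', h'⟩⟩

theorem DConvex.mem_of_hasDirWalk (hT : DConvex A T) (hu : u ∈ T) (hv : v ∈ T)
    (h₁ : HasDirWalk A k u w) (h₂ : HasDirWalk A l w v)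
    (hmin : ∀ d, HasDirWalk A d u v → k + l ≤ d) : w ∈ T := by
  obtain ⟨f, hf⟩ := h₁
  obtain ⟨g, hg⟩ := h₂
  simpa [hf.2.1] using
    hT.2 u hu v hv _ _ ⟨hf.append hg, fun d f' h => hmin d ⟨f', h⟩⟩ k (by lia)

theorem DConvex.exists_arc_crossing (hT : DConvex A T) (hu : u ∈ T) (hv : v ∈ T)
    (huv : DirReachable A u v) {R : Set V} (huR : u ∈ R) (hvR : v ∉ R) :
    ∃ x ∈ T, ∃ y ∈ T, A x y ∧ x ∈ R ∧ y ∉ R := by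
  obtain ⟨k, f, hg⟩ := huv.exists_isGeodesic
  have hmem : ∀ i ≤ k, f i ∈ T := hT.2 u hu v hv k f hg
  obtain ⟨i, hi, hiR, hiR'⟩ : ∃ i < k, f i ∈ R ∧ f (i + 1) ∉ R := by
    by_contra! hstay
    have hR : ∀ i ≤ k, f i ∈ R := fun i => by
      induction i with
      | zero => exact fun _ => hg.1.1 ▸ huR
      | succ i ih => exact fun hi => hstay i hi (ih (by lia))
    exact hvR (hg.1.2.1 ▸ hR k le_rfl)
  exact ⟨f i, hmem i hi.le, f (i + 1), hmem (i + 1) hi, hg.1.2.2 i hi, hiR, hiR'⟩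

theorem DConvex.exists_pred_mem (hT : DConvex A T) (hr : ∀ u ∈ T, ∀ v ∈ T, DirReachable A u v)
    (hnt : T.Nontrivial) (hv : v ∈ T) : ∃ x ∈ T, A x v := by
  obtain ⟨u, hu, huv⟩ := hnt.exists_ne v
  obtain ⟨x, hx, y, _, hxy, _, hyv⟩ :=
    hT.exists_arc_crossing (R := {v}ᶜ) hu hv (hr u hu v hv) huv (by simp)
  obtain rfl : y = v := by simpa using hyv
  exact ⟨x, hx, hxy⟩

theorem DConvex.exists_succ_mem (hT : DConvex A T) (hr : ∀ u ∈ T, ∀ v ∈ T, DirReachable A u v)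
    (hnt : T.Nontrivial) (hv : v ∈ T) : ∃ x ∈ T, A v x := by
  obtain ⟨u, hu, huv⟩ := hnt.exists_ne v
  obtain ⟨x, _, y, hy, hxy, rfl, _⟩ :=
    hT.exists_arc_crossing (R := {v}) hv hu (hr v hv u hu) rfl huv
  exact ⟨y, hy, hxy⟩

theorem DConvex.mem_of_forall_pred_eq (hT : DConvex A T)
    (hr : ∀ u ∈ T, ∀ v ∈ T, DirReachable A u v) (hnt : T.Nontrivial) (hv : v ∈ T)
    (h : ∀ x, A x v → x = w) : w ∈ T := by
  obtain ⟨x, hx, hxv⟩ := hT.exists_pred_mem hr hnt hv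
  exact h x hxv ▸ hx

theorem DConvex.mem_of_forall_succ_eq (hT : DConvex A T)
    (hr : ∀ u ∈ T, ∀ v ∈ T, DirReachable A u v) (hnt : T.Nontrivial) (hv : v ∈ T)
    (h : ∀ x, A v x → x = w) : w ∈ T := by
  obtain ⟨x, hx, hvx⟩ := hT.exists_succ_mem hr hnt hv
  exact h x hvx ▸ hx

theorem dConvex_of_shortcuts {C : Set V} (hne : C.Nonempty)
    (hC : ∀ x ∈ C, ∀ y ∈ C, ∀ e ∉ C, ∀ s ∉ C, A x e → A s y → ∀ d,
      HasDirWalk (fun a b => A a b ∧ a ∉ C ∧ b ∉ C) d e s → ∃ k < d + 2, HasDirWalk A k x y) :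
    DConvex A C := by
  classical
  refine ⟨hne, fun u hu v hv k f hg i hik => ?_⟩
  by_contra hi
  have hex : ∃ q, i ≤ q ∧ q ≤ k ∧ f q ∈ C := ⟨k, hik, le_rfl, hg.1.2.1 ▸ hv⟩
  obtain ⟨hiq, hqk, hq⟩ := Nat.find_spec hex
  have hqmin : ∀ j, i ≤ j → j < Nat.find hex → f j ∉ C := fun j hij hj hjC =>
    Nat.find_min hex hj ⟨hij, by lia, hjC⟩
  set q := Nat.find hex
  set p := Nat.findGreatest (fun j => f j ∈ C) i
  have hpC : f p ∈ C :=
    Nat.findGreatest_spec (P := fun j => f j ∈ C) (Nat.zero_le i) (hg.1.1 ▸ hu)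
  have hpi : p ≤ i := Nat.findGreatest_le i
  have hpmax : ∀ j, p < j → j ≤ i → f j ∉ C := fun j => Nat.findGreatest_is_greatest
  have hpi' : p ≠ i := fun h => hi (h ▸ hpC)
  have hqi' : q ≠ i := fun h => hi (h ▸ hq)
  have hout : ∀ j, p < j → j < q → f j ∉ C := fun j hpj hjq =>
    (le_total j i).elim (hpmax j hpj) fun hij => hqmin j hij hjq
  have hwalk :
      HasDirWalk (fun a b => A a b ∧ a ∉ C ∧ b ∉ C) (q - p - 2) (f (p + 1)) (f (q - 1)) := by
    have h := hasDirWalk_of_forall_arc (A := fun a b => A a b ∧ a ∉ C ∧ b ∉ C) (k := q - p - 2)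
      (fun j => f (p + 1 + j)) fun j hj => ⟨hg.1.2.2 _ (by lia), hout _ (by lia) (by lia),
        hout _ (by lia) (by lia)⟩
    rwa [show p + 1 + (q - p - 2) = q - 1 by lia] at h
  have hqq : A (f (q - 1)) (f q) := by
    simpa [show q - 1 + 1 = q by lia] using hg.1.2.2 (q - 1) (by lia)
  obtain ⟨l, hl, hshort⟩ := hC _ hpC _ hq _ (hout _ (by lia) (by lia)) _
    (hout _ (by lia) (by lia)) (hg.1.2.2 p (by lia)) hqq _ hwalk
  have := hg.sub_le_of_hasDirWalk (by lia) hqk hshort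
  lia

theorem dConvex_of_potential {C : Set V} (hne : C.Nonempty) (h : V → ℕ)
    (hlip : ∀ a ∉ C, ∀ b ∉ C, A a b → h b ≤ h a + 1)
    (hC : ∀ x ∈ C, ∀ y ∈ C, ∀ e ∉ C, ∀ s ∉ C, A x e → A s y →
      ∃ k, HasDirWalk A k x y ∧ k + h e ≤ h s + 1) : DConvex A C := by
  refine dConvex_of_shortcuts hne fun x hx y hy e he s hs hxe hsy d hd => ?_
  obtain ⟨k, hk, hle⟩ := hC x hx y hy e he s hs hxe hsy
  have := hd.le_add_of_lipschitz h fun a b hab => hlip a hab.2.1 b hab.2.2 hab.1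
  exact ⟨k, by lia, hk⟩

section Embedding

variable {W : Type*} {φ : V → W} {B : W → W → Prop}

theorem IsDirWalk.map (hf : IsDirWalk (φ ⁻¹'o B) k f u v) :
    IsDirWalk B k (φ ∘ f) (φ u) (φ v) :=
  ⟨congrArg φ hf.1, congrArg φ hf.2.1, hf.2.2⟩

theorem IsDirWalk.exists_lift {g : ℕ → W} (hφ : φ.Injective)
    (hB : ∀ x y, B x y → x ∈ Set.range φ ∧ y ∈ Set.range φ) (hg : IsDirWalk B k g (φ u) (φ v)) :
    ∃ f, IsDirWalk (φ ⁻¹'o B) k f u v ∧ ∀ i ≤ k, φ (f i) = g i := by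
  obtain ⟨hg0, hgk, hg⟩ := hg
  have hlift : ∀ i, ∃ x, i ≤ k → φ x = g i := fun i => by
    rcases lt_trichotomy i k with hik | rfl | hik
    · exact (hB _ _ (hg i hik)).1.imp fun _ hx _ => hx
    · exact ⟨v, fun _ => hgk.symm⟩
    · exact ⟨v, fun h => absurd h (by lia)⟩
  choose f hf using hlift
  refine ⟨f, ⟨hφ ?_, hφ ?_, fun i hi => ?_⟩, hf⟩
  · rw [hf 0 (by lia), hg0]
  · rw [hf k le_rfl, hgk]
  · rw [Order.Preimage, hf i hi.le, hf (i + 1) hi]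
    exact hg i hi

theorem dirReachable_preimage_iff (hφ : φ.Injective)
    (hB : ∀ x y, B x y → x ∈ Set.range φ ∧ y ∈ Set.range φ) :
    DirReachable (φ ⁻¹'o B) u v ↔ DirReachable B (φ u) (φ v) :=
  ⟨fun ⟨k, _, hf⟩ => ⟨k, _, hf.map⟩, fun ⟨k, _, hg⟩ =>
    let ⟨f, hf, _⟩ := hg.exists_lift hφ hB
    ⟨k, f, hf⟩⟩

theorem dConvex_preimage_iff (hφ : φ.Injective)
    (hB : ∀ x y, B x y → x ∈ Set.range φ ∧ y ∈ Set.range φ) :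
    DConvex (φ ⁻¹'o B) T ↔ DConvex B (φ '' T) := by
  refine and_congr Set.image_nonempty.symm ?_
  rw [Set.forall_mem_image]
  refine forall₂_congr fun u _ => ?_
  rw [Set.forall_mem_image]
  refine forall₂_congr fun v _ => ⟨fun h k g hg i hi => ?_, fun h k f hf i hi => ?_⟩
  · obtain ⟨f, hf, hfg⟩ := hg.1.exists_lift hφ hB
    exact ⟨f i, h k f ⟨hf, fun k' f' hf' => hg.2 k' _ hf'.map⟩ i hi, hfg i hi⟩
  · refine hφ.mem_set_image.mp (h k (φ ∘ f) ⟨hf.1.map, fun k' g hg => ?_⟩ i hi)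
    obtain ⟨f', hf', _⟩ := hg.exists_lift hφ hB
    exact hf.2 k' f' hf'

theorem convexityNumber_preimage [Fintype V] (hφ : φ.Injective)
    (hB : ∀ x y, B x y → x ∈ Set.range φ ∧ y ∈ Set.range φ) :
    convexityNumber (φ ⁻¹'o B) =
      sSup {k | ∃ C ⊆ Set.range φ, DConvex B C ∧ C ≠ Set.range φ ∧ C.ncard = k} := by
  unfold convexityNumber
  congr! 3 with k
  rw [Set.exists_subset_range_and_iff]
  simp only [dConvex_preimage_iff hφ hB, ← Set.image_univ, hφ.image_injective.ne_iff,
    Set.ncard_image_of_injective _ hφ]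

end Embedding

theorem strongConvexitySpectrum_subset_of_iso {W : Type*} [Fintype V] [Fintype W]
    {G : SimpleGraph V} {G' : SimpleGraph W} (e : G ≃g G') :
    strongConvexitySpectrum G' ⊆ strongConvexitySpectrum G := by
  rintro _ ⟨A, ⟨hadj, harc, hasymm⟩, hstrong, rfl⟩
  have hA : ∀ x y, A x y → x ∈ Set.range e ∧ y ∈ Set.range e := by simp [e.surjective.range_eq]
  refine ⟨e ⁻¹'o A, ⟨fun x y h => e.map_adj_iff.mp (hadj _ _ h),
    fun x y h => harc _ _ (e.map_adj_iff.mpr h), fun x y => hasymm _ _⟩,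
    fun u v => (dirReachable_preimage_iff e.injective hA).mpr (hstrong _ _), ?_⟩
  rw [convexityNumber_preimage e.injective hA, e.surjective.range_eq]
  simp only [Set.subset_univ, true_and, convexityNumber]

end Digraph

/-! ### Orientations of the grid -/

section Grid

variable {n m : ℕ} {H D S : Set (ℕ × ℕ)} {u v w : ℕ × ℕ} {T : Set (ℕ × ℕ)} {i j i' j' k l : ℕ}

/-- The vertex set of the grid `P_n □ P_m`, with coordinates starting from `0`: all arguments below
take place in `ℕ × ℕ`, the first coordinate being the row and the second one the column. -/
def gridBox (n m : ℕ) : Set (ℕ × ℕ) :=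
  {v | v.1 < n ∧ v.2 < m}

/-- The orientation of the grid in which the edge from `v` to its right neighbour points to the
right if `v ∈ H` and to the left otherwise, and the edge from `v` to its lower neighbour points
down if `v ∈ D` and up otherwise. -/
def gridArc (n m : ℕ) (H D : Set (ℕ × ℕ)) (u v : ℕ × ℕ) : Prop :=
  (u ∈ gridBox n m ∧ v ∈ gridBox n m) ∧
    (v.1 = u.1 ∧ v.2 = u.2 + 1 ∧ u ∈ H ∨ v.1 = u.1 ∧ u.2 = v.2 + 1 ∧ v ∉ H ∨
      v.2 = u.2 ∧ v.1 = u.1 + 1 ∧ u ∈ D ∨ v.2 = u.2 ∧ u.1 = v.1 + 1 ∧ v ∉ D)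

/-- The vertices of `P_n □ P_m` as elements of `ℕ × ℕ`. -/
def gridCoords (v : Fin n × Fin m) : ℕ × ℕ :=
  (v.1, v.2)

theorem gridCoords_injective : (gridCoords (n := n) (m := m)).Injective := by
  rintro ⟨i, j⟩ ⟨i', j'⟩ h
  simpa [gridCoords, Fin.ext_iff] using h

theorem range_gridCoords : Set.range (gridCoords (n := n) (m := m)) = gridBox n m := by
  ext ⟨i, j⟩
  constructor
  · rintro ⟨v, hv⟩
    exact hv ▸ ⟨v.1.2, v.2.2⟩
  · rintro ⟨hi, hj⟩
    exact ⟨(⟨i, hi⟩, ⟨j, hj⟩), rfl⟩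

theorem gridArc_asymm (h : gridArc n m H D u v) : ¬gridArc n m H D v u := by
  rintro ⟨_, h'⟩
  rcases h with ⟨_, h | h | h | h⟩ <;>
  rcases h' with h' | h' | h' | h' <;> lia

theorem isOrientation_gridArc :
    IsOrientation (gridGraph n m) (gridCoords ⁻¹'o gridArc n m H D) := by
  have hadj : ∀ x y : Fin n × Fin m, (gridGraph n m).Adj x y ↔
      ((x.1 : ℕ) + 1 = y.1 ∨ (y.1 : ℕ) + 1 = x.1) ∧ (x.2 : ℕ) = y.2 ∨
        ((x.2 : ℕ) + 1 = y.2 ∨ (y.2 : ℕ) + 1 = x.2) ∧ (x.1 : ℕ) = y.1 := by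
    simp [gridGraph, SimpleGraph.boxProd_adj, SimpleGraph.pathGraph_adj, Fin.ext_iff]
  refine ⟨fun x y ⟨_, h⟩ => (hadj x y).mpr ?_, fun x y h => ?_, fun x y => gridArc_asymm⟩
  · simp only [gridCoords] at h
    lia
  · have hx : gridCoords x ∈ gridBox n m := range_gridCoords ▸ ⟨x, rfl⟩
    have hy : gridCoords y ∈ gridBox n m := range_gridCoords ▸ ⟨y, rfl⟩
    rcases (hadj x y).mp h with ⟨h | h, h'⟩ | ⟨h | h, h'⟩
    · exact (em (gridCoords x ∈ D)).imp (⟨⟨hx, hy⟩, .inr <| .inr <| .inl ⟨h'.symm, h.symm, ·⟩⟩)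
        (⟨⟨hy, hx⟩, .inr <| .inr <| .inr ⟨h', h.symm, ·⟩⟩)
    · exact (em (gridCoords y ∈ D)).symm.imp
        (⟨⟨hx, hy⟩, .inr <| .inr <| .inr ⟨h'.symm, h.symm, ·⟩⟩)
        (⟨⟨hy, hx⟩, .inr <| .inr <| .inl ⟨h', h.symm, ·⟩⟩)
    · exact (em (gridCoords x ∈ H)).imp (⟨⟨hx, hy⟩, .inl ⟨h'.symm, h.symm, ·⟩⟩)
        (⟨⟨hy, hx⟩, .inr <| .inl ⟨h', h.symm, ·⟩⟩)
    · exact (em (gridCoords y ∈ H)).symm.imp (⟨⟨hx, hy⟩, .inr <| .inl ⟨h'.symm, h.symm, ·⟩⟩)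
        (⟨⟨hy, hx⟩, .inl ⟨h', h.symm, ·⟩⟩)

theorem ncard_setOf_rows {l h : ℕ → ℕ} :
    {v : ℕ × ℕ | v.1 < n ∧ l v.1 ≤ v.2 ∧ v.2 < h v.1}.ncard =
      ∑ i ∈ Finset.range n, (h i - l i) := by
  have : {v : ℕ × ℕ | v.1 < n ∧ l v.1 ≤ v.2 ∧ v.2 < h v.1} = Equiv.sigmaEquivProd ℕ ℕ ''
      ((Finset.range n).sigma fun i => Finset.Ico (l i) (h i) : Finset ((_ : ℕ) × ℕ)) := by
    ext ⟨i, j⟩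
    simp
  rw [this, Set.ncard_image_of_injective _ (Equiv.injective _), Set.ncard_coe_finset,
    Finset.card_sigma]
  simp

theorem ncard_gridBox : (gridBox n m).ncard = n * m := by
  simpa [gridBox] using ncard_setOf_rows (n := n) (l := fun _ => 0) (h := fun _ => m)

theorem finite_gridBox : (gridBox n m).Finite := by
  rw [← range_gridCoords]
  exact Set.finite_range _

theorem sub_ncard_mem_strongConvexitySpectrum_gridGraph (hS : S ⊆ gridBox n m) (hne : S.Nonempty)
    (hstrong : ∀ u ∈ gridBox n m, ∀ v ∈ gridBox n m, DirReachable (gridArc n m H D) u v)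
    (hconv : DConvex (gridArc n m H D) (gridBox n m \ S))
    (hmax : ∀ T ⊆ gridBox n m, DConvex (gridArc n m H D) T → (T ∩ S).Nonempty →
      gridBox n m ⊆ T ∨ T.ncard ≤ n * m - S.ncard) :
    n * m - S.ncard ∈ strongConvexitySpectrum (gridGraph n m) := by
  have hbox : ∀ x y, gridArc n m H D x y →
      x ∈ Set.range (gridCoords (n := n) (m := m)) ∧ y ∈ Set.range (gridCoords (n := n) (m := m)) :=
    fun x y h => by simpa only [range_gridCoords] using h.1
  have hcard : (gridBox n m \ S).ncard = n * m - S.ncard := by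
    rw [Set.ncard_sdiff hS (finite_gridBox.subset hS), ncard_gridBox]
  refine ⟨gridCoords ⁻¹'o gridArc n m H D, isOrientation_gridArc, fun u v => ?_, ?_⟩
  · refine (dirReachable_preimage_iff gridCoords_injective hbox).mpr (hstrong _ ?_ _ ?_) <;>
    exact range_gridCoords ▸ Set.mem_range_self _
  rw [convexityNumber_preimage gridCoords_injective hbox, range_gridCoords]
  refine IsGreatest.csSup_eq ⟨⟨_, Set.sdiff_subset, hconv, fun h => ?_, hcard⟩, ?_⟩
  · obtain ⟨s, hs⟩ := hne
    exact (h.ge (hS hs)).2 hs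
  · rintro _ ⟨T, hTbox, hT, hTne, rfl⟩
    by_cases hTS : Disjoint T S
    · exact hcard ▸ Set.ncard_le_ncard (Set.subset_sdiff.mpr ⟨hTbox, hTS⟩)
        (finite_gridBox.subset Set.sdiff_subset)
    · exact (hmax T hTbox hT (Set.not_disjoint_iff_nonempty_inter.mp hTS)).resolve_left
        fun h => hTne (hTbox.antisymm h)

theorem hasDirWalk_right (hi : i < n) (hjj : j ≤ j') (hj : j' < m)
    (hH : ∀ k, j ≤ k → k < j' → (i, k) ∈ H) :
    HasDirWalk (gridArc n m H D) (j' - j) (i, j) (i, j') := by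
  simpa [hjj] using hasDirWalk_of_forall_arc (A := gridArc n m H D) (k := j' - j)
    (fun k => (i, j + k)) fun k _ => ⟨⟨⟨hi, by lia⟩, hi, by lia⟩,
      .inl ⟨rfl, rfl, hH _ (by lia) (by lia)⟩⟩

theorem hasDirWalk_left (hi : i < n) (hjj : j ≤ j') (hj : j' < m)
    (hH : ∀ k, j ≤ k → k < j' → (i, k) ∉ H) :
    HasDirWalk (gridArc n m H D) (j' - j) (i, j') (i, j) := by
  simpa [Nat.sub_sub_self hjj] using hasDirWalk_of_forall_arc (A := gridArc n m H D) (k := j' - j)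
    (fun k => (i, j' - k)) fun k _ => ⟨⟨⟨hi, by lia⟩, hi, by lia⟩,
      .inr <| .inl ⟨rfl, by lia, hH _ (by lia) (by lia)⟩⟩

theorem hasDirWalk_down (hj : j < m) (hii : i ≤ i') (hi : i' < n)
    (hD : ∀ k, i ≤ k → k < i' → (k, j) ∈ D) :
    HasDirWalk (gridArc n m H D) (i' - i) (i, j) (i', j) := by
  simpa [hii] using hasDirWalk_of_forall_arc (A := gridArc n m H D) (k := i' - i)
    (fun k => (i + k, j)) fun k _ => ⟨⟨⟨by lia, hj⟩, by lia, hj⟩,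
      .inr <| .inr <| .inl ⟨rfl, rfl, hD _ (by lia) (by lia)⟩⟩

theorem hasDirWalk_up (hj : j < m) (hii : i ≤ i') (hi : i' < n)
    (hD : ∀ k, i ≤ k → k < i' → (k, j) ∉ D) :
    HasDirWalk (gridArc n m H D) (i' - i) (i', j) (i, j) := by
  simpa [Nat.sub_sub_self hii] using hasDirWalk_of_forall_arc (A := gridArc n m H D) (k := i' - i)
    (fun k => (i' - k, j)) fun k _ => ⟨⟨⟨by lia, hj⟩, by lia, hj⟩,
      .inr <| .inr <| .inr ⟨rfl, by lia, hD _ (by lia) (by lia)⟩⟩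

theorem HasDirWalk.dist_le (h : HasDirWalk (gridArc n m H D) k u v) :
    Nat.dist u.1 v.1 + Nat.dist u.2 v.2 ≤ k := by
  have := h.le_add_of_lipschitz (fun w => Nat.dist u.1 w.1 + Nat.dist u.2 w.2) fun x y hxy => by
    simp only [Nat.dist]
    have := hxy.2
    lia
  simpa using this

theorem DConvex.mem_of_add_le_dist (hT : DConvex (gridArc n m H D) T) (hu : u ∈ T) (hv : v ∈ T)
    (h₁ : HasDirWalk (gridArc n m H D) k u w) (h₂ : HasDirWalk (gridArc n m H D) l w v)
    (hkl : k + l ≤ Nat.dist u.1 v.1 + Nat.dist u.2 v.2) : w ∈ T :=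
  hT.mem_of_hasDirWalk hu hv h₁ h₂ fun _ hd => hkl.trans hd.dist_le

theorem three_le_of_gridArc (hvu : gridArc n m H D v u)
    (h : HasDirWalk (gridArc n m H D) k u v) : 3 ≤ k := by
  by_contra! hk
  interval_cases k
  · obtain rfl := hasDirWalk_zero_iff.mp h
    exact gridArc_asymm hvu hvu
  · obtain ⟨x, hx, hxv⟩ := hasDirWalk_succ_iff.mp h
    obtain rfl := hasDirWalk_zero_iff.mp hx
    exact gridArc_asymm hvu hxv
  · obtain ⟨x, hx, ⟨_, hxv⟩⟩ := hasDirWalk_succ_iff.mp h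
    obtain ⟨y, hy, ⟨_, hyx⟩⟩ := hasDirWalk_succ_iff.mp hx
    obtain rfl := hasDirWalk_zero_iff.mp hy
    have := hvu.2
    lia

theorem DConvex.mem_of_directed_square {x : ℕ × ℕ} (hT : DConvex (gridArc n m H D) T) (hu : u ∈ T)
    (hv : v ∈ T) (hvu : gridArc n m H D v u) (huw : gridArc n m H D u w)
    (hwx : gridArc n m H D w x) (hxv : gridArc n m H D x v) : w ∈ T ∧ x ∈ T := by
  have hmin : ∀ d, HasDirWalk (gridArc n m H D) d u v → 3 ≤ d := fun d => three_le_of_gridArc hvu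
  exact ⟨hT.mem_of_hasDirWalk hu hv (hasDirWalk_one huw)
      ((hasDirWalk_one hwx).trans (hasDirWalk_one hxv)) hmin,
    hT.mem_of_hasDirWalk hu hv ((hasDirWalk_one huw).trans (hasDirWalk_one hwx))
      (hasDirWalk_one hxv) hmin⟩

/-- The base orientation of all constructions: rows point to the right and columns point down,
except that the last row points to the left, the first column points up, and the last row is
entered from above only in its last vertex `(n - 1, m - 1)`. Then the horizontal edges starting in
`F` and the vertical edges starting in `G` are turned against this pattern (no edge of the last row
or the first column is affected, as these have their exceptional direction anyway). -/
def frameArc (n m : ℕ) (F G : Set (ℕ × ℕ)) : ℕ × ℕ → ℕ × ℕ → Prop :=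
  gridArc n m {v | v.1 + 1 ≠ n ∧ v ∉ F} {v | v.2 ≠ 0 ∧ (v.1 + 2 = n → v.2 + 1 = m) ∧ v ∉ G}

variable {F G : Set (ℕ × ℕ)}

theorem hasDirWalk_frameArc_right (hi : i + 1 < n) (hjj : j ≤ j') (hj : j' < m)
    (hF : ∀ k, j ≤ k → k < j' → (i, k) ∉ F) :
    HasDirWalk (frameArc n m F G) (j' - j) (i, j) (i, j') :=
  hasDirWalk_right (by lia) hjj hj fun k hk hk' => ⟨hi.ne, hF k hk hk'⟩

theorem hasDirWalk_frameArc_down (hj0 : 1 ≤ j) (hj : j < m) (hii : i ≤ i') (hi : i' < n)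
    (hcorner : i' + 1 = n → j + 1 = m) (hG : ∀ k, i ≤ k → k < i' → (k, j) ∉ G) :
    HasDirWalk (frameArc n m F G) (i' - i) (i, j) (i', j) :=
  hasDirWalk_down hj hii hi fun k hk hk' =>
    ⟨Nat.one_le_iff_ne_zero.mp hj0, fun hkn => hcorner (by lia), hG k hk hk'⟩

theorem hasDirWalk_frameArc_right_down (hj0 : 1 ≤ j') (hjj : j ≤ j') (hj : j' < m) (hii : i ≤ i')
    (hi : i + 1 < n) (hi' : i' < n) (hcorner : i' + 1 = n → j' + 1 = m)
    (hF : ∀ k, j ≤ k → k < j' → (i, k) ∉ F) (hG : ∀ k, i ≤ k → k < i' → (k, j') ∉ G) :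
    HasDirWalk (frameArc n m F G) (j' - j + (i' - i)) (i, j) (i', j') :=
  (hasDirWalk_frameArc_right hi hjj hj hF).trans
    (hasDirWalk_frameArc_down hj0 hj hii hi' hcorner hG)

theorem hasDirWalk_frameArc_left (hi : i + 1 = n) (hjj : j ≤ j') (hj : j' < m) :
    HasDirWalk (frameArc n m F G) (j' - j) (i, j') (i, j) :=
  hasDirWalk_left (by lia) hjj hj fun _ _ _ h => h.1 hi

theorem hasDirWalk_frameArc_up (hm : 0 < m) (hii : i ≤ i') (hi : i' < n) :
    HasDirWalk (frameArc n m F G) (i' - i) (i', 0) (i, 0) :=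
  hasDirWalk_up hm hii hi fun _ _ _ h => h.1 rfl

theorem frameArc_left_of_mem (hi : i < n) (hj : j + 1 < m) (h : (i, j) ∈ F) :
    frameArc n m F G (i, j + 1) (i, j) :=
  ⟨⟨⟨hi, hj⟩, hi, by lia⟩, .inr <| .inl ⟨rfl, rfl, fun h' => h'.2 h⟩⟩

theorem frameArc_up_of_mem (hi : i + 1 < n) (hj : j < m) (h : (i, j) ∈ G) :
    frameArc n m F G (i + 1, j) (i, j) :=
  ⟨⟨⟨hi, hj⟩, by lia, hj⟩, .inr <| .inr <| .inr ⟨rfl, rfl, fun h' => h'.2.2 h⟩⟩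

theorem dirReachable_frameArc (hn : 2 ≤ n) (hm : 2 ≤ m) (h₀ : (0, 0) ∉ F)
    (hz : ∀ i j, i + 1 < n → 1 ≤ j → j < m →
      DirReachable (frameArc n m F G) (i, j) (n - 1, m - 1))
    (hframe : ∀ i j, i + 1 < n → 1 ≤ j → j < m → ∃ a b, (a + 1 = n ∨ b = 0) ∧
      (a, b) ∈ gridBox n m ∧ DirReachable (frameArc n m F G) (a, b) (i, j)) :
    ∀ u ∈ gridBox n m, ∀ v ∈ gridBox n m, DirReachable (frameArc n m F G) u v := by
  have corner_to : ∀ a b, (a + 1 = n ∨ b = 0) → (a, b) ∈ gridBox n m →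
      DirReachable (frameArc n m F G) (n - 1, m - 1) (a, b) := by
    rintro a b h ⟨ha, hb⟩
    dsimp only at ha hb
    rcases h with h | rfl
    · obtain rfl : a = n - 1 := by lia
      exact (hasDirWalk_frameArc_left h (by lia) (by lia)).dirReachable
    · exact ((hasDirWalk_frameArc_left (by lia) (by lia) (by lia)).trans
        (hasDirWalk_frameArc_up hb (by lia) (by lia))).dirReachable
  have origin_to_corner : DirReachable (frameArc n m F G) (0, 0) (n - 1, m - 1) :=
    (hasDirWalk_frameArc_right (j' := 1) (by lia) (by lia) (by lia)
      fun k _ hk => by simpa [Nat.lt_one_iff.mp hk] using h₀).dirReachable.trans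
      (hz 0 1 (by lia) le_rfl (by lia))
  have to_corner : ∀ u ∈ gridBox n m, DirReachable (frameArc n m F G) u (n - 1, m - 1) := by
    rintro ⟨i, j⟩ ⟨hi, hj⟩
    dsimp only at hi hj
    by_cases h : i + 1 < n ∧ 1 ≤ j
    · exact hz i j h.1 h.2 hj
    · refine DirReachable.trans (DirReachable.trans (v := (i, 0)) ?_
        (hasDirWalk_frameArc_up (by lia) (by lia) hi).dirReachable) origin_to_corner
      rcases j.eq_zero_or_pos with rfl | hj0
      · exact (hasDirWalk_zero_iff.mpr rfl).dirReachable
      · exact (hasDirWalk_frameArc_left (by lia) (by lia) hj).dirReachable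
  rintro u hu ⟨i, j⟩ ⟨hi, hj⟩
  refine (to_corner u hu).trans ?_
  by_cases h : i + 1 < n ∧ 1 ≤ j
  · obtain ⟨a, b, hab, habbox, hwalk⟩ := hframe i j h.1 h.2 hj
    exact (corner_to a b hab habbox).trans hwalk
  · exact corner_to i j (by lia) ⟨hi, hj⟩

theorem DConvex.frame_mem (hT : DConvex (frameArc n m F G) T)
    (hr : ∀ u ∈ T, ∀ v ∈ T, DirReachable (frameArc n m F G) u v) (hnt : T.Nontrivial)
    (hi₀ : (i, 0) ∈ T) (hin : i < n) (hF : ∀ k, i ≤ k → (k, 0) ∉ F) :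
    (∀ k, i ≤ k → k < n → (k, 0) ∈ T) ∧ ∀ j < m, (n - 1, j) ∈ T := by
  have hcol : ∀ k, i ≤ k → k < n → (k, 0) ∈ T := fun k hk => by
    induction k, hk using Nat.le_induction with
    | base => exact fun _ => hi₀
    | succ k hk ih =>
      refine fun hkn => hT.mem_of_forall_pred_eq hr hnt (ih (by lia)) ?_
      rintro ⟨a, b⟩ ⟨_, h | h | h | h⟩ <;> simp only [Prod.mk.injEq] at h ⊢
      · lia
      · obtain ⟨rfl, rfl, h⟩ := h
        exact (h ⟨by lia, hF _ hk⟩).elim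
      · exact absurd h.1.symm h.2.2.1
      · lia
  refine ⟨hcol, fun j => ?_⟩
  induction j with
  | zero => exact fun _ => hcol _ (by lia) (by lia)
  | succ j ih =>
    refine fun hjm => hT.mem_of_forall_pred_eq hr hnt (ih (by lia)) ?_
    rintro ⟨a, b⟩ ⟨⟨⟨ha, _⟩, _⟩, h | h | h | h⟩ <;> simp only [Prod.mk.injEq] at ha h ⊢
    · exact absurd (by grind) h.2.2.1
    · lia
    · have : b + 1 = m := h.2.2.2.1 (by lia)
      lia
    · lia

/-! ### Staircases -/

/-- The profile of a staircase-shaped region in the upper part of the `n × m` grid: row `i` of the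
region consists of the columns `j ≥ p i`. It starts with a full row, and does not meet the last two
rows. -/
structure IsStaircase (n m : ℕ) (p : ℕ → ℕ) : Prop where
  zero : p 0 = 0
  two_le_one : 2 ≤ p 1
  mono : Monotone p
  le_last : m ≤ p (n - 2)

/-- The vertices of the grid in the staircase region with profile `p`. -/
def staircase (n m : ℕ) (p : ℕ → ℕ) : Set (ℕ × ℕ) :=
  {v ∈ gridBox n m | p v.1 ≤ v.2}

/-- The orientation in which the staircase region can be entered only through the arc from `(1, 0)`
to `(0, 0)`: the edges crossing its left boundary point out of it. -/
def staircaseArc (n m : ℕ) (p : ℕ → ℕ) : ℕ × ℕ → ℕ × ℕ → Prop :=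
  frameArc n m {v | v.2 + 1 = p v.1} ∅

namespace IsStaircase

variable {p : ℕ → ℕ}

theorem two_le (hp : IsStaircase n m p) (hi : 1 ≤ i) : 2 ≤ p i :=
  hp.two_le_one.trans (hp.mono hi)

theorem le_of_le (hp : IsStaircase n m p) (hi : n ≤ i + 2) : m ≤ p i :=
  hp.le_last.trans (hp.mono (by lia))

theorem hasDirWalk_origin (hp : IsStaircase n m p) (hi : i + 1 < n) (hj0 : 1 ≤ j) (hj : j < m) :
    HasDirWalk (staircaseArc n m p) (j + i) (0, 0) (i, j) := by
  refine hasDirWalk_frameArc_right_down hj0 (by lia) hj (by lia) (by lia) (by lia) (by lia) ?_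
    (by simp)
  simp [hp.zero]

theorem hasDirWalk_corner (hp : IsStaircase n m p) (hi : i + 1 < n) (hj0 : 1 ≤ j) (hj : j < m) :
    HasDirWalk (staircaseArc n m p) ((n - 1 - i) + (m - 1 - j)) (i, j) (n - 1, m - 1) := by
  have hdown : HasDirWalk (staircaseArc n m p) (n - 2 - i) (i, j) (n - 2, j) :=
    hasDirWalk_frameArc_down hj0 hj (by lia) (by lia) (by lia) (by simp)
  have hright : HasDirWalk (staircaseArc n m p) (m - 1 - j + (n - 1 - (n - 2)))
      (n - 2, j) (n - 1, m - 1) := by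
    refine hasDirWalk_frameArc_right_down (by lia) (by lia) (by lia) (by lia) (by lia) (by lia)
      (by lia) (fun k _ hk => ?_) (by simp)
    have := hp.le_last
    simp only [Set.mem_ofPred_eq]
    lia
  convert hdown.trans hright using 1
  lia

theorem dirReachable (hp : IsStaircase n m p) (hn : 2 ≤ n) (hm : 2 ≤ m) :
    ∀ u ∈ gridBox n m, ∀ v ∈ gridBox n m, DirReachable (staircaseArc n m p) u v :=
  dirReachable_frameArc hn hm (by simp [hp.zero])
    (fun _ _ hi hj0 hj => (hp.hasDirWalk_corner hi hj0 hj).dirReachable)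
    fun _ _ hi hj0 hj => ⟨0, 0, .inr rfl, ⟨by lia, by lia⟩,
      (hp.hasDirWalk_origin hi hj0 hj).dirReachable⟩

theorem eq_of_entry (hp : IsStaircase n m p) {x e : ℕ × ℕ} (hx : x ∉ staircase n m p)
    (he : e ∈ staircase n m p) (h : staircaseArc n m p x e) : x = (1, 0) ∧ e = (0, 0) := by
  obtain ⟨a, b⟩ := x
  obtain ⟨c, d⟩ := e
  obtain ⟨⟨hxbox, hebox⟩, h⟩ := h
  have hx' : ¬p a ≤ b := fun hab => hx ⟨hxbox, hab⟩
  have he' : p c ≤ d := he.2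
  have hmono := @hp.mono a c
  have hlast := hp.le_of_le (i := c)
  have htwo := hp.two_le (i := c)
  simp only [Set.mem_ofPred_eq, gridBox, Prod.mk.injEq, Set.mem_empty_iff_false] at h hebox ⊢
  rcases h with h | h | h | h <;> grind

theorem add_lt_add_of_arc (hp : IsStaircase n m p) {x y : ℕ × ℕ} (hx : x ∈ staircase n m p)
    (hy : y ∈ staircase n m p) (h : staircaseArc n m p x y) : x.1 + x.2 < y.1 + y.2 := by
  obtain ⟨a, b⟩ := x
  obtain ⟨c, d⟩ := y
  obtain ⟨hbox, h⟩ := h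
  have hx' : p a ≤ b := hx.2
  have hy' : p c ≤ d := hy.2
  have hlast := hp.le_of_le (i := c)
  have htwo := hp.two_le (i := a)
  simp only [Set.mem_ofPred_eq, gridBox, Set.mem_empty_iff_false] at h hbox ⊢
  rcases h with h | h | h | h <;> grind

theorem exit_le (hp : IsStaircase n m p) {s y : ℕ × ℕ} (hs : s ∈ staircase n m p)
    (hy : y ∉ staircase n m p) (h : staircaseArc n m p s y) :
    1 ≤ y.1 ∧ y.1 + 1 < n ∧ 1 ≤ y.2 ∧ y.2 < p y.1 ∧ y.2 + y.1 ≤ s.1 + s.2 + 1 := by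
  obtain ⟨a, b⟩ := s
  obtain ⟨c, d⟩ := y
  obtain ⟨⟨hsbox, hybox⟩, h⟩ := h
  have hs' : p a ≤ b := hs.2
  have hy' : ¬p c ≤ d := fun hcd => hy ⟨hybox, hcd⟩
  have hc : 1 ≤ c := by
    rw [Nat.one_le_iff_ne_zero]
    rintro rfl
    exact hy' (hp.zero.trans_le d.zero_le)
  have hmono := @hp.mono c a
  have hlast := hp.le_of_le (i := a)
  have htwo := hp.two_le hc
  simp only [Set.mem_ofPred_eq, gridBox, Set.mem_empty_iff_false] at h hsbox ⊢
  rcases h with h | h | h | h <;> grind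

theorem dConvex_diff (hp : IsStaircase n m p) (hn : 2 ≤ n) (hm : 0 < m) :
    DConvex (staircaseArc n m p) (gridBox n m \ staircase n m p) := by
  refine dConvex_of_potential ⟨(n - 1, 0), ⟨by lia, hm⟩, fun h => ?_⟩ (fun v => v.1 + v.2)
    (fun a _ b _ hab => ?_) fun x hx y hy e he s hs hxe hsy => ?_
  · have := h.2
    have := hp.le_of_le (i := n - 1) (by lia)
    lia
  · have := hab.2
    lia
  obtain ⟨rfl, rfl⟩ := hp.eq_of_entry hx.2 (by simpa [hxe.1.2] using he) hxe
  obtain ⟨hy1, hyn, hy2, hyp, hle⟩ := hp.exit_le (by simpa [hsy.1.1] using hs) hy.2 hsy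
  obtain ⟨a, b⟩ := y
  have hstart : HasDirWalk (staircaseArc n m p) (1 - 0 + (a - 1)) (1, 0) (a, 1) := by
    refine hasDirWalk_frameArc_right_down le_rfl (by lia) (by have := hy.1.2; lia) hy1 (by lia)
      (by lia) (by lia) (fun k _ hk => ?_) (by simp)
    have := hp.two_le_one
    simp only [Set.mem_ofPred_eq]
    lia
  have hrow : HasDirWalk (staircaseArc n m p) (b - 1) (a, 1) (a, b) :=
    hasDirWalk_frameArc_right hyn hy2 hy.1.2 fun k _ hk => by
      simp only [Set.mem_ofPred_eq]
      lia
  exact ⟨_, hstart.trans hrow, by lia⟩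

theorem origin_mem (hp : IsStaircase n m p) (hT : DConvex (staircaseArc n m p) T)
    (hr : ∀ u ∈ T, ∀ v ∈ T, DirReachable (staircaseArc n m p) u v) (hnt : T.Nontrivial)
    (hvT : v ∈ T) (hvS : v ∈ staircase n m p) : (0, 0) ∈ T := by
  induction hd : v.1 + v.2 using Nat.strong_induction_on generalizing v with
  | _ d ih =>
    obtain rfl | hv := eq_or_ne v (0, 0)
    · exact hvT
    obtain ⟨x, hxT, hxv⟩ := hT.exists_pred_mem hr hnt hvT
    have hxS : x ∈ staircase n m p := by
      by_contra hx
      exact hv (hp.eq_of_entry hx hvS hxv).2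
    exact ih _ (hd ▸ hp.add_lt_add_of_arc hxS hvS hxv) hxT hxS rfl

theorem subset_of_mem (hp : IsStaircase n m p) (hn : 2 ≤ n) (hm : 2 ≤ m) (hTbox : T ⊆ gridBox n m)
    (hT : DConvex (staircaseArc n m p) T) (hnt : T.Nontrivial)
    (hTS : (T ∩ staircase n m p).Nonempty) : gridBox n m ⊆ T := by
  have hr : ∀ u ∈ T, ∀ v ∈ T, DirReachable (staircaseArc n m p) u v :=
    fun u hu v hv => hp.dirReachable hn hm u (hTbox hu) v (hTbox hv)
  obtain ⟨v, hvT, hvS⟩ := hTS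
  have hO := hp.origin_mem hT hr hnt hvT hvS
  obtain ⟨hcol, hbot⟩ := hT.frame_mem hr hnt hO (by lia) fun k _ => by
    have hzero := hp.zero
    have htwo := hp.two_le (i := k)
    rcases k.eq_zero_or_pos with rfl | hk
    all_goals simp only [Set.mem_ofPred_eq]; lia
  rintro ⟨i, j⟩ ⟨hi, hj⟩
  dsimp only at hi hj
  by_cases hint : i + 1 < n ∧ 1 ≤ j
  · refine hT.mem_of_add_le_dist hO (hbot (m - 1) (by lia))
      (hp.hasDirWalk_origin hint.1 hint.2 hj) (hp.hasDirWalk_corner hint.1 hint.2 hj) ?_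
    simp only [Nat.dist]
    lia
  · rcases Nat.lt_or_ge (i + 1) n with hin | hin
    · obtain rfl : j = 0 := by lia
      exact hcol i (by lia) hi
    · obtain rfl : i = n - 1 := by lia
      exact hbot j hj

theorem sub_ncard_mem_strongConvexitySpectrum (hp : IsStaircase n m p) (hn : 2 ≤ n) (hm : 2 ≤ m) :
    n * m - (staircase n m p).ncard ∈ strongConvexitySpectrum (gridGraph n m) := by
  have hO : (0, 0) ∈ staircase n m p := ⟨⟨by lia, by lia⟩, hp.zero.le⟩
  refine sub_ncard_mem_strongConvexitySpectrum_gridGraph (Set.sep_subset _ _) ⟨_, hO⟩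
    (hp.dirReachable hn hm) (hp.dConvex_diff hn (by lia)) fun T hTbox hT hTS => ?_
  by_cases hnt : T.Nontrivial
  · exact .inl (hp.subset_of_mem hn hm hTbox hT hnt hTS)
  · right
    have hT1 : T.ncard ≤ 1 := (Set.ncard_le_one (finite_gridBox.subset hTbox)).mpr
      (Set.not_nontrivial_iff.mp hnt)
    have hlt : (staircase n m p).ncard < n * m := by
      rw [← ncard_gridBox]
      refine Set.ncard_lt_ncard ((Set.ssubset_iff_of_subset (Set.sep_subset _ _)).mpr
        ⟨(n - 1, 0), ⟨by lia, by lia⟩, fun h => ?_⟩) finite_gridBox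
      have := hp.two_le (i := n - 1) (by lia)
      have := h.2
      lia
    lia

end IsStaircase

theorem sub_staircase_mem_strongConvexitySpectrum {q r : ℕ} (hn : 4 ≤ n) (hq : 2 ≤ q) (hqr : q ≤ r)
    (hrm : r ≤ m) (hr : r < m → 5 ≤ n) :
    n * m - (m + (m - q) + (m - r)) ∈ strongConvexitySpectrum (gridGraph n m) := by
  set p : ℕ → ℕ := fun i => if i = 0 then 0 else if i = 1 then q else if i = 2 then r else m
  have hp : IsStaircase n m p := by
    refine ⟨rfl, hq, monotone_nat_of_le_succ fun i => ?_, ?_⟩ <;> grind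
  have hcard : (staircase n m p).ncard = m + (m - q) + (m - r) := by
    have hrows : staircase n m p = {v | v.1 < n ∧ p v.1 ≤ v.2 ∧ v.2 < m} := by
      ext v
      simp only [staircase, gridBox, Set.mem_ofPred_eq]
      tauto
    rw [hrows, ncard_setOf_rows (h := fun _ => m),
      ← Finset.sum_subset (Finset.range_mono (show 3 ≤ n by lia)) (by grind)]
    simp [Finset.sum_range_succ, p]
  exact hcard ▸ hp.sub_ncard_mem_strongConvexitySpectrum (by lia) (by lia)

/-! ### Corner blocks -/

/-- The block of `a + 3` vertices in the upper left corner of the grid consisting of the first `a`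
vertices of the first row and the first three vertices of the second row. -/
def cornerBlock (a : ℕ) : Set (ℕ × ℕ) :=
  {v | v.1 = 0 ∧ v.2 < a ∨ v.1 = 1 ∧ v.2 < 3}

/-- The orientation in which the corner block can be entered only through the arc from `(2, 0)` to
`(1, 0)`, and a walk in it starting at `(1, 0)` has to wind through
`(0, 0), (0, 1), (1, 1), (1, 2), (0, 2), …, (0, a - 1)`. -/
def cornerArc (n m a : ℕ) : ℕ × ℕ → ℕ × ℕ → Prop :=
  frameArc n m {(0, 1), (1, 0)} {(0, 2), (0, a), (1, 3)}

section Corner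

variable {a : ℕ}

/-- The length of a shortest walk from `(1, 0)` to a vertex of the corner block within this
block. -/
def cornerDepth (v : ℕ × ℕ) : ℕ :=
  if v.1 = 0 then if v.2 ≤ 1 then v.2 + 1 else v.2 + 3 else if v.2 = 0 then 0 else v.2 + 2

theorem hasDirWalk_cornerArc_right (hij : 2 ≤ i + j) (hi : i + 1 < n) (hjj : j ≤ j') (hj : j' < m) :
    HasDirWalk (cornerArc n m a) (j' - j) (i, j) (i, j') :=
  hasDirWalk_frameArc_right hi hjj hj fun k hk _ => by grind

theorem hasDirWalk_cornerArc_corner (ha : 3 ≤ a) (ham : a + 2 ≤ m) (hij : 2 ≤ i + j)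
    (hi : i + 1 < n) (hj : j < m) :
    HasDirWalk (cornerArc n m a) (m - 1 - j + (n - 1 - i)) (i, j) (n - 1, m - 1) :=
  hasDirWalk_frameArc_right_down (by lia) (by lia) (by lia) (by lia) hi (by lia) (by lia)
    (fun k hk _ => by grind) fun k _ _ => by grind

theorem hasDirWalk_cornerArc_interior (hi2 : 2 ≤ i) (hi : i + 1 < n) (hj0 : 1 ≤ j) (hj : j < m) :
    HasDirWalk (cornerArc n m a) (j + (i - 2)) (2, 0) (i, j) :=
  hasDirWalk_frameArc_right_down hj0 (by lia) hj hi2 (by lia) (by lia) (by lia)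
    (fun k _ _ => by simp) fun k _ _ => by grind

theorem cornerArc_spiral (hn : 4 ≤ n) (hm : 4 ≤ m) (ha : 3 ≤ a) :
    cornerArc n m a (0, 0) (0, 1) ∧ cornerArc n m a (0, 1) (1, 1) ∧
      cornerArc n m a (1, 1) (1, 2) ∧ cornerArc n m a (1, 2) (0, 2) ∧
      cornerArc n m a (0, 2) (0, 1) := by
  refine ⟨⟨?_, ?_⟩, ⟨?_, ?_⟩, ⟨?_, ?_⟩, ⟨?_, ?_⟩, ⟨?_, ?_⟩⟩ <;>
  grind [gridBox]

theorem dirReachable_cornerArc (hn : 4 ≤ n) (ha : 3 ≤ a) (ham : a + 2 ≤ m) :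
    ∀ u ∈ gridBox n m, ∀ v ∈ gridBox n m, DirReachable (cornerArc n m a) u v := by
  obtain ⟨h₁, h₂, h₃, h₄, _⟩ := cornerArc_spiral (n := n) (m := m) hn (by lia) ha
  refine dirReachable_frameArc (by lia) (by lia) (by simp) (fun i j hi hj0 hj => ?_)
    fun i j hi hj0 hj => ?_
  · by_cases hij : 2 ≤ i + j
    · exact (hasDirWalk_cornerArc_corner ha ham hij hi hj).dirReachable
    · obtain ⟨rfl, rfl⟩ : i = 0 ∧ j = 1 := by lia
      exact ((hasDirWalk_one h₂).trans
        (hasDirWalk_cornerArc_corner ha ham le_rfl (by lia) hj)).dirReachable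
  rcases Nat.lt_or_ge i 2 with hi2 | hi2
  · refine ⟨0, 0, .inr rfl, ⟨by lia, by lia⟩, ?_⟩
    have hwalk : HasDirWalk (cornerArc n m a) 2 (0, 0) (1, 1) :=
      (hasDirWalk_one h₁).trans (hasDirWalk_one h₂)
    obtain rfl | rfl : i = 1 ∨ i = 0 := by lia
    · exact (hwalk.trans (hasDirWalk_cornerArc_right le_rfl hi hj0 hj)).dirReachable
    · rcases hj0.eq_or_lt with rfl | hj2
      · exact (hasDirWalk_one h₁).dirReachable
      · exact (((hwalk.trans (hasDirWalk_one h₃)).trans (hasDirWalk_one h₄)).trans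
          (hasDirWalk_cornerArc_right le_rfl hi hj2 hj)).dirReachable
  · exact ⟨2, 0, .inr rfl, ⟨by lia, by lia⟩,
      (hasDirWalk_cornerArc_interior hi2 hi hj0 hj).dirReachable⟩

theorem cornerArc_entry (hn : 4 ≤ n) (ha : 3 ≤ a) {x e : ℕ × ℕ} (hx : x ∉ cornerBlock a)
    (he : e ∈ cornerBlock a) (h : cornerArc n m a x e) : x = (2, 0) ∧ e = (1, 0) := by
  obtain ⟨_, h⟩ := h
  simp only [cornerBlock, Set.mem_ofPred_eq, Set.mem_insert_iff, Set.mem_singleton_iff,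
    Prod.ext_iff] at hx he h ⊢
  rcases h with h | h | h | h <;> grind

theorem cornerDepth_le_of_arc {x y : ℕ × ℕ} (hx : x ∈ cornerBlock a)
    (hy : y ∈ cornerBlock a) (h : cornerArc n m a x y) : cornerDepth y ≤ cornerDepth x + 1 := by
  obtain ⟨_, h⟩ := h
  simp only [cornerBlock, Set.mem_ofPred_eq, Set.mem_insert_iff, Set.mem_singleton_iff,
    Prod.ext_iff, cornerDepth] at hx hy h ⊢
  rcases h with h | h | h | h <;> grind

theorem cornerArc_exit (ha : 3 ≤ a) {s y : ℕ × ℕ} (hs : s ∈ cornerBlock a)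
    (hy : y ∉ cornerBlock a) (h : cornerArc n m a s y) :
    y.1 = 2 ∧ 1 ≤ y.2 ∧ y.2 ≤ cornerDepth s + 1 ∨
      y.1 = 1 ∧ 3 ≤ y.2 ∧ y.2 ≤ cornerDepth s ∨
      y.1 = 0 ∧ y.2 = a ∧ a + 2 ≤ cornerDepth s + 1 := by
  obtain ⟨_, h⟩ := h
  simp only [cornerBlock, Set.mem_ofPred_eq, Set.mem_insert_iff, Set.mem_singleton_iff,
    Prod.ext_iff, cornerDepth] at hs hy h ⊢
  rcases h with h | h | h | h <;> grind

theorem hasDirWalk_cornerArc_row_one (hn : 4 ≤ n) (hj3 : 3 ≤ j) (hj : j < m) :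
    HasDirWalk (cornerArc n m a) (j + 1) (2, 0) (1, j) := by
  have hrow : HasDirWalk (cornerArc n m a) (3 - 0) (2, 0) (2, 3) :=
    hasDirWalk_cornerArc_right le_rfl (by lia) (by lia) (by lia)
  have hup : cornerArc n m a (2, 3) (1, 3) := frameArc_up_of_mem (by lia) (by lia) (by simp)
  have hright : HasDirWalk (cornerArc n m a) (j - 3) (1, 3) (1, j) :=
    hasDirWalk_cornerArc_right (by lia) (by lia) hj3 hj
  convert (hrow.trans (hasDirWalk_one hup)).trans hright using 1
  lia

theorem dConvex_diff_cornerBlock (hn : 4 ≤ n) (ha : 3 ≤ a) (ham : a + 2 ≤ m) :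
    DConvex (cornerArc n m a) (gridBox n m \ cornerBlock a) := by
  refine dConvex_of_potential ⟨(2, 0), ⟨by lia, by lia⟩, by simp [cornerBlock]⟩ cornerDepth
    (fun u hu v hv huv => cornerDepth_le_of_arc (by simpa [huv.1.1] using hu)
      (by simpa [huv.1.2] using hv) huv) fun x hx y hy e he s hs hxe hsy => ?_
  obtain ⟨rfl, rfl⟩ := cornerArc_entry hn ha hx.2 (by simpa [hxe.1.2] using he) hxe
  have hdepth : cornerDepth (1, 0) = 0 := rfl
  have hexit := cornerArc_exit ha (by simpa [hsy.1.1] using hs) hy.2 hsy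
  obtain ⟨i, j⟩ := y
  have hj : j < m := hy.1.2
  dsimp only at hexit
  rcases hexit with ⟨rfl, _, hle⟩ | ⟨rfl, hj3, hle⟩ | ⟨rfl, rfl, hle⟩
  · exact ⟨_, hasDirWalk_cornerArc_right le_rfl (by lia) j.zero_le hj, by lia⟩
  · exact ⟨_, hasDirWalk_cornerArc_row_one hn hj3 hj, by lia⟩
  · have hup : cornerArc n m j (1, j) (0, j) := frameArc_up_of_mem (by lia) hj (by simp)
    exact ⟨_, (hasDirWalk_cornerArc_row_one hn ha hj).trans (hasDirWalk_one hup), by lia⟩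

theorem spiral_mem_of_cornerArc (hn : 4 ≤ n) (hm : 4 ≤ m) (ha : 3 ≤ a)
    (hT : DConvex (cornerArc n m a) T)
    (hr : ∀ u ∈ T, ∀ v ∈ T, DirReachable (cornerArc n m a) u v)
    (hTS : (T ∩ cornerBlock a).Nonempty) (hTS' : (T \ cornerBlock a).Nonempty) :
    (2, 0) ∈ T ∧ (1, 0) ∈ T ∧ (0, 0) ∈ T ∧ (0, 1) ∈ T ∧ (1, 1) ∈ T ∧ (0, 2) ∈ T := by
  obtain ⟨v, hv, hvS⟩ := hTS
  obtain ⟨u, hu, huS⟩ := hTS'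
  have hnt : T.Nontrivial := ⟨u, hu, v, hv, fun h => huS (h ▸ hvS)⟩
  obtain ⟨x, hx, y, hy, hxy, hxS, hyS⟩ :=
    hT.exists_arc_crossing hu hv (hr u hu v hv) (R := (cornerBlock a)ᶜ) huS (not_not_intro hvS)
  obtain ⟨rfl, rfl⟩ := cornerArc_entry hn ha hxS (not_not.mp hyS) hxy
  have h₀ : (0, 0) ∈ T := hT.mem_of_forall_succ_eq hr hnt hy fun x ⟨_, h⟩ => by
    simp only [Set.mem_ofPred_eq, Prod.ext_iff] at h ⊢
    grind
  have h₁ : (0, 1) ∈ T := hT.mem_of_forall_succ_eq hr hnt h₀ fun x ⟨_, h⟩ => by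
    simp only [Set.mem_ofPred_eq, Prod.ext_iff] at h ⊢
    grind
  have h₂ : (1, 1) ∈ T := hT.mem_of_forall_succ_eq hr hnt h₁ fun x ⟨_, h⟩ => by
    simp only [Set.mem_ofPred_eq, Prod.ext_iff] at h ⊢
    grind
  obtain ⟨_, a₁, a₂, a₃, a₄⟩ := cornerArc_spiral (n := n) (m := m) hn hm ha
  exact ⟨hx, hy, h₀, h₁, h₂, (hT.mem_of_directed_square h₂ h₁ a₁ a₂ a₃ a₄).2⟩

theorem gridBox_subset_of_cornerArc (hn : 4 ≤ n) (ha : 3 ≤ a) (ham : a + 2 ≤ m)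
    (hTbox : T ⊆ gridBox n m) (hT : DConvex (cornerArc n m a) T)
    (hTS : (T ∩ cornerBlock a).Nonempty) (hTS' : (T \ cornerBlock a).Nonempty) :
    gridBox n m ⊆ T := by
  have hr : ∀ u ∈ T, ∀ v ∈ T, DirReachable (cornerArc n m a) u v :=
    fun u hu v hv => dirReachable_cornerArc hn ha ham u (hTbox hu) v (hTbox hv)
  obtain ⟨h20, h10, h00, h01, h11, h02⟩ := spiral_mem_of_cornerArc hn (by lia) ha hT hr hTS hTS'
  obtain ⟨hcol, hbot⟩ := hT.frame_mem hr ⟨_, h10, _, h00, by simp⟩ h20 (by lia) fun k hk => by grind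
  have mem_of_walk : ∀ {i j k : ℕ} {v : ℕ × ℕ}, v ∈ T → HasDirWalk (cornerArc n m a) k v (i, j) →
      k ≤ (i - v.1) + (j - v.2) → v.1 ≤ i → v.2 ≤ j → 2 ≤ i + j → i + 1 < n → j < m →
      (i, j) ∈ T := by
    intro i j k v hv hk hle hvi hvj hij hi hj
    refine hT.mem_of_add_le_dist hv (hbot (m - 1) (by lia)) hk
      (hasDirWalk_cornerArc_corner ha ham hij hi hj) ?_
    simp only [Nat.dist]
    lia
  rintro ⟨i, j⟩ ⟨hi, hj⟩
  dsimp only at hi hj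
  obtain h | rfl | h : i + 1 = n ∨ j = 0 ∨ (i + 1 < n ∧ 1 ≤ j) := by lia
  · obtain rfl : i = n - 1 := by lia
    exact hbot j hj
  · obtain rfl | rfl | h2 : i = 0 ∨ i = 1 ∨ 2 ≤ i := by lia
    exacts [h00, h10, hcol i h2 hi]
  obtain h2 | rfl | ⟨rfl, h2⟩ | ⟨rfl, rfl⟩ :
      2 ≤ i ∨ i = 1 ∨ (i = 0 ∧ 2 ≤ j) ∨ (i = 0 ∧ j = 1) := by lia
  · exact mem_of_walk h20 (hasDirWalk_cornerArc_interior h2 h.1 h.2 hj) (by lia) h2 j.zero_le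
      (by lia) h.1 hj
  · exact mem_of_walk h11 (hasDirWalk_cornerArc_right le_rfl h.1 h.2 hj) (by lia) le_rfl h.2
      (by lia) h.1 hj
  · exact mem_of_walk h02 (hasDirWalk_cornerArc_right le_rfl h.1 h2 hj) (by lia) le_rfl h2
      (by lia) h.1 hj
  · exact h01

theorem ncard_cornerBlock : (cornerBlock a).ncard = a + 3 := by
  have hrows : cornerBlock a =
      {v | v.1 < 2 ∧ 0 ≤ v.2 ∧ v.2 < if v.1 = 0 then a else 3} := by
    ext v
    simp only [cornerBlock, Set.mem_ofPred_eq]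
    grind
  rw [hrows, ncard_setOf_rows (l := fun _ => 0) (h := fun i => if i = 0 then a else 3)]
  simp [Finset.sum_range_succ]

theorem sub_cornerBlock_mem_strongConvexitySpectrum (hn : 4 ≤ n) (ha : 3 ≤ a) (ham : a + 2 ≤ m) :
    n * m - (a + 3) ∈ strongConvexitySpectrum (gridGraph n m) := by
  have hcard := ncard_cornerBlock (a := a)
  have hbox : cornerBlock a ⊆ gridBox n m := by
    rintro v (hv | hv) <;> exact ⟨by lia, by lia⟩
  rw [← hcard]
  refine sub_ncard_mem_strongConvexitySpectrum_gridGraph hbox ⟨(1, 0), by simp [cornerBlock]⟩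
    (dirReachable_cornerArc hn ha ham) (dConvex_diff_cornerBlock hn ha ham)
    fun T hTbox hT hTS => ?_
  by_cases hTS' : (T \ cornerBlock a).Nonempty
  · exact .inl (gridBox_subset_of_cornerArc hn ha ham hTbox hT hTS hTS')
  · have hTcard : T.ncard ≤ (cornerBlock a).ncard :=
      Set.ncard_le_ncard (Set.sdiff_eq_empty.mp (Set.not_nonempty_iff_eq_empty.mp hTS'))
        (finite_gridBox.subset hbox)
    have : 4 * m ≤ n * m := Nat.mul_le_mul_right m hn
    right
    lia

end Corner

/-! ### Hooks in grids with four rows -/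

/-- The region of the `4 × m` grid consisting of the first row, the first column, and the second row
without its last three vertices. -/
def hook (m : ℕ) : Set (ℕ × ℕ) :=
  {v ∈ gridBox 4 m | v.1 = 0 ∨ v.2 = 0 ∨ v.1 = 1 ∧ v.2 + 3 < m}

/-- The orientation of the `4 × m` grid in which the hook can be entered only in its first
column. -/
def hookArc (m : ℕ) : ℕ × ℕ → ℕ × ℕ → Prop :=
  frameArc 4 m {(1, 0), (2, 0)} {(1, m - 3)}

theorem hasDirWalk_hookArc_origin (hi : i < 2) (hj0 : 1 ≤ j) (hj : j < m) :
    HasDirWalk (hookArc m) (j + i) (0, 0) (i, j) :=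
  hasDirWalk_frameArc_right_down hj0 (by lia) hj (by lia) (by lia) (by lia) (by lia)
    (fun k _ _ => by simp) fun k _ _ => by grind

theorem hasDirWalk_hookArc_corner (hm : 4 ≤ m) (hi : i < 3) (hj0 : 1 ≤ j) (hj : j < m) :
    HasDirWalk (hookArc m) (m - 1 - j + (3 - i)) (i, j) (3, m - 1) :=
  hasDirWalk_frameArc_right_down (by lia) (by lia) (by lia) (by lia) (by lia) (by lia) (by lia)
    (fun k _ _ => by grind) fun k _ _ => by grind

theorem hasDirWalk_hookArc_right (hi : i < 3) (hj0 : 1 ≤ j) (hjj : j ≤ j') (hj : j' < m) :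
    HasDirWalk (hookArc m) (j' - j) (i, j) (i, j') :=
  hasDirWalk_frameArc_right (by lia) hjj hj fun k _ _ => by grind

theorem hookArc_up (hm : 4 ≤ m) : hookArc m (3, 1) (2, 1) :=
  ⟨⟨⟨by lia, by lia⟩, by lia, by lia⟩, .inr <| .inr <| .inr ⟨rfl, rfl, by grind⟩⟩

theorem hasDirWalk_hookArc_row_one (hm : 4 ≤ m) (hjm : m ≤ j + 3) (hj : j < m) :
    HasDirWalk (hookArc m) j (2, 1) (1, j) := by
  have hup : hookArc m (2, m - 3) (1, m - 3) := frameArc_up_of_mem (by lia) (by lia) (by simp)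
  convert ((hasDirWalk_hookArc_right (by lia) le_rfl (by lia) (by lia)).trans
    (hasDirWalk_one hup)).trans
      (hasDirWalk_hookArc_right (by lia) (by lia) (by lia : m - 3 ≤ j) hj) using 1
  lia

theorem dirReachable_hookArc (hm : 4 ≤ m) :
    ∀ u ∈ gridBox 4 m, ∀ v ∈ gridBox 4 m, DirReachable (hookArc m) u v := by
  refine dirReachable_frameArc (by lia) (by lia) (by simp)
    (fun i j hi hj0 hj => (hasDirWalk_hookArc_corner hm (by lia) hj0 hj).dirReachable)
    fun i j hi hj0 hj => ?_
  obtain hi2 | rfl : i < 2 ∨ i = 2 := by lia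
  · exact ⟨0, 0, .inr rfl, ⟨by lia, by lia⟩, (hasDirWalk_hookArc_origin hi2 hj0 hj).dirReachable⟩
  · exact ⟨3, 1, .inl rfl, ⟨by lia, by lia⟩, ((hasDirWalk_one (hookArc_up hm)).trans
      (hasDirWalk_hookArc_right (by lia) le_rfl hj0 hj)).dirReachable⟩

/-- The length of a shortest walk from `(0, 0)` to a vertex of the hook outside the first column
within the hook; it is extended by `0` to the first column, which contains all entries of the
hook. -/
def hookDepth (v : ℕ × ℕ) : ℕ :=
  if v.2 = 0 then 0 else v.2 + v.1

theorem hookDepth_le_of_arc {x y : ℕ × ℕ} (hx : x ∈ hook m) (hy : y ∈ hook m)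
    (h : hookArc m x y) : hookDepth y ≤ hookDepth x + 1 := by
  obtain ⟨_, h⟩ := h
  simp only [hook, Set.mem_ofPred_eq, Set.mem_insert_iff, Set.mem_singleton_iff,
    Prod.ext_iff, hookDepth] at hx hy h ⊢
  rcases h with h | h | h | h <;> grind

theorem hookArc_entry {x e : ℕ × ℕ} (hx : x ∉ hook m) (he : e ∈ hook m)
    (h : hookArc m x e) : e.2 = 0 ∧ (x = (3, 1) ∨ x = (2, 1) ∨ x = (1, 1) ∧ m ≤ 4) := by
  obtain ⟨⟨hxbox, _⟩, h⟩ := h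
  simp only [hook, gridBox, Set.mem_ofPred_eq, Set.mem_insert_iff, Set.mem_singleton_iff,
    Prod.ext_iff] at hxbox hx he h ⊢
  rcases h with h | h | h | h <;> grind

theorem hookArc_exit {s y : ℕ × ℕ} (hs : s ∈ hook m) (hy : y ∉ hook m)
    (h : hookArc m s y) :
    1 ≤ y.2 ∧ (y.1 = 2 ∧ y.2 + 3 < m ∨ y.1 = 1 ∧ m ≤ y.2 + 3) ∧ y.2 ≤ hookDepth s := by
  obtain ⟨⟨_, hybox⟩, h⟩ := h
  simp only [hook, gridBox, Set.mem_ofPred_eq, Set.mem_insert_iff, Set.mem_singleton_iff,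
    Prod.ext_iff, hookDepth] at hybox hs hy h ⊢
  rcases h with h | h | h | h <;> grind

theorem hasDirWalk_hookArc_of_entry (hm : 4 ≤ m) {x : ℕ × ℕ}
    (hx : x = (3, 1) ∨ x = (2, 1) ∨ x = (1, 1) ∧ m ≤ 4) (hj0 : 1 ≤ j) (hj : j < m)
    (hij : i = 2 ∧ j + 3 < m ∨ i = 1 ∧ m ≤ j + 3) :
    ∃ k ≤ j + 1, HasDirWalk (hookArc m) k x (i, j) := by
  have hwalk : ∃ k ≤ j, HasDirWalk (hookArc m) k (2, 1) (i, j) := by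
    rcases hij with ⟨rfl, _⟩ | ⟨rfl, hjm⟩
    · exact ⟨_, j.sub_le 1, hasDirWalk_hookArc_right (by lia) le_rfl hj0 hj⟩
    · exact ⟨_, le_rfl, hasDirWalk_hookArc_row_one hm hjm hj⟩
  obtain ⟨k, hk, hwalk⟩ := hwalk
  obtain rfl | rfl | ⟨rfl, hm4⟩ := hx
  · exact ⟨_, by lia, (hasDirWalk_one (hookArc_up hm)).trans hwalk⟩
  · exact ⟨k, by lia, hwalk⟩
  · obtain rfl : i = 1 := by lia
    exact ⟨_, by lia, hasDirWalk_hookArc_right (by lia) le_rfl hj0 hj⟩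

theorem dConvex_diff_hook (hm : 4 ≤ m) : DConvex (hookArc m) (gridBox 4 m \ hook m) := by
  refine dConvex_of_potential ⟨(3, 1), ⟨by lia, by lia⟩, by simp [hook]⟩ hookDepth
    (fun u hu v hv huv => hookDepth_le_of_arc (by simpa [huv.1.1] using hu)
      (by simpa [huv.1.2] using hv) huv) fun x hx y hy e he s hs hxe hsy => ?_
  obtain ⟨he0, hx'⟩ := hookArc_entry hx.2 (by simpa [hxe.1.2] using he) hxe
  obtain ⟨hy0, hrow, hle⟩ := hookArc_exit (by simpa [hsy.1.1] using hs) hy.2 hsy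
  obtain ⟨k, hk, hwalk⟩ := hasDirWalk_hookArc_of_entry hm hx' hy0 hy.1.2 hrow
  have hdepth : hookDepth e = 0 := by simp [hookDepth, he0]
  exact ⟨k, hwalk, by lia⟩

theorem origin_mem_of_hookArc (hT : DConvex (hookArc m) T)
    (hr : ∀ u ∈ T, ∀ v ∈ T, DirReachable (hookArc m) u v) {s t : ℕ × ℕ} (hs : s ∈ T)
    (hsS : s ∈ hook m) (ht : t ∈ T) (htS : t ∉ hook m) (htbox : t ∈ gridBox 4 m) : (0, 0) ∈ T := by
  by_cases hs0 : 1 ≤ s.1 ∧ s.2 = 0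
  · obtain ⟨x, _, y, hy, ⟨⟨hxb, _⟩, hxy⟩, hxR, hyR⟩ := hT.exists_arc_crossing hs ht (hr s hs t ht)
      (R := {v | 1 ≤ v.1 ∧ v.2 = 0}) hs0 fun h => htS ⟨htbox, .inr <| .inl h.2⟩
    obtain rfl : y = (0, 0) := by
      simp only [Set.mem_ofPred_eq, Set.mem_insert_iff, Set.mem_singleton_iff, gridBox,
        Prod.ext_iff] at hxy hxR hyR hxb ⊢
      rcases hxy with h | h | h | h <;> grind
    exact hy
  · obtain ⟨x, _, y, hy, ⟨⟨hxb, _⟩, hxy⟩, hxR, hyR⟩ := hT.exists_arc_crossing ht hs (hr t ht s hs)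
      (R := {v | ¬(v.1 = 0 ∨ v.1 = 1 ∧ 1 ≤ v.2 ∧ v.2 + 3 < m)})
      (fun h => htS ⟨htbox, by lia⟩) (not_not_intro (by have := hsS.2; lia))
    obtain rfl : y = (0, 0) := by
      simp only [Set.mem_ofPred_eq, Set.mem_insert_iff, Set.mem_singleton_iff, gridBox,
        Prod.ext_iff] at hxy hxR hyR hxb ⊢
      rcases hxy with h | h | h | h <;> grind
    exact hy

theorem corner_mem_of_hookArc (hT : DConvex (hookArc m) T)
    (hr : ∀ u ∈ T, ∀ v ∈ T, DirReachable (hookArc m) u v) (hO : (0, 0) ∈ T)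
    {t : ℕ × ℕ} (ht : t ∈ T) (htS : t ∉ hook m) (htbox : t ∈ gridBox 4 m)
    (ht1 : t ≠ (1, 1)) (ht2 : t ≠ (2, 1)) : (2, m - 1) ∈ T ∧ (3, m - 1) ∈ T := by
  have hcol : 1 ≤ t.2 := by
    rw [Nat.one_le_iff_ne_zero]
    exact fun h => htS ⟨htbox, .inr <| .inl h⟩
  suffices ∃ x ∈ T, ∃ y ∈ T, x = (2, m - 1) ∧ y = (3, m - 1) by
    obtain ⟨x, hx, y, hy, rfl, rfl⟩ := this
    exact ⟨hx, hy⟩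
  by_cases ht3 : t.1 = 3
  · obtain ⟨x, hx, y, hy, ⟨⟨hxb, _⟩, hxy⟩, hxR, hyR⟩ := hT.exists_arc_crossing hO ht (hr _ hO _ ht)
      (R := {v | ¬(v.1 = 3 ∧ 1 ≤ v.2)}) (by simp) (not_not_intro ⟨ht3, hcol⟩)
    refine ⟨x, hx, y, hy, ?_⟩
    simp only [Set.mem_ofPred_eq, gridBox, Prod.ext_iff] at hxy hxR hyR hxb ⊢
    rcases hxy with h | h | h | h <;> grind
  · have htR : t.1 ≤ 2 ∧ 2 ≤ t.2 := by
      simp only [hook, gridBox, Set.mem_ofPred_eq, ne_eq, Prod.ext_iff] at htS htbox ht1 ht2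
      lia
    obtain ⟨x, hx, y, hy, ⟨⟨hxb, _⟩, hxy⟩, hxR, hyR⟩ := hT.exists_arc_crossing ht hO (hr _ ht _ hO)
      (R := {v | v.1 ≤ 2 ∧ 2 ≤ v.2}) htR (by simp)
    refine ⟨x, hx, y, hy, ?_⟩
    simp only [Set.mem_ofPred_eq, gridBox, Prod.ext_iff] at hxy hxR hyR hxb ⊢
    rcases hxy with h | h | h | h <;> grind

theorem gridBox_subset_of_hookArc (hm : 4 ≤ m) (hTbox : T ⊆ gridBox 4 m)
    (hT : DConvex (hookArc m) T) (hTS : (T ∩ hook m).Nonempty)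
    (hTS' : ¬T ⊆ hook m ∪ {(1, 1), (2, 1)}) : gridBox 4 m ⊆ T := by
  have hr : ∀ u ∈ T, ∀ v ∈ T, DirReachable (hookArc m) u v :=
    fun u hu v hv => dirReachable_hookArc hm u (hTbox hu) v (hTbox hv)
  obtain ⟨s, hs, hsS⟩ := hTS
  obtain ⟨t, ht, htS⟩ := Set.not_subset.mp hTS'
  simp only [Set.mem_union, Set.mem_insert_iff, Set.mem_singleton_iff, not_or] at htS
  have hO := origin_mem_of_hookArc hT hr hs hsS ht htS.1 (hTbox ht)
  obtain ⟨hy, hz⟩ := corner_mem_of_hookArc hT hr hO ht htS.1 (hTbox ht) htS.2.1 htS.2.2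
  have hbot : ∀ j < m, (3, j) ∈ T := fun j hj =>
    hT.mem_of_add_le_dist hz hO (hasDirWalk_frameArc_left rfl (by lia) (by lia))
      ((hasDirWalk_frameArc_left rfl j.zero_le hj).trans
        (hasDirWalk_frameArc_up (by lia) (by lia) (by lia))) (by simp only [Nat.dist]; lia)
  rintro ⟨i, j⟩ ⟨hi, hj⟩
  dsimp only at hi hj
  obtain rfl | rfl | ⟨hi2, hj0⟩ | ⟨rfl, hj0⟩ :
      i = 3 ∨ j = 0 ∨ (i < 2 ∧ 1 ≤ j) ∨ (i = 2 ∧ 1 ≤ j) := by lia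
  · exact hbot j hj
  · exact hT.mem_of_add_le_dist (hbot 0 hj) hO
      (hasDirWalk_frameArc_up hj (by lia : i ≤ 3) (by lia))
      (hasDirWalk_frameArc_up hj i.zero_le hi) (by simp only [Nat.dist]; lia)
  · exact hT.mem_of_add_le_dist hO hz (hasDirWalk_hookArc_origin hi2 hj0 hj)
      (hasDirWalk_hookArc_corner hm (by lia) hj0 hj) (by simp only [Nat.dist]; lia)
  · exact hT.mem_of_add_le_dist (hbot 1 (by lia)) hy ((hasDirWalk_one (hookArc_up hm)).trans
      (hasDirWalk_hookArc_right (by lia) le_rfl hj0 hj))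
      (hasDirWalk_hookArc_right (by lia) hj0 (by lia) (by lia)) (by simp only [Nat.dist]; lia)

theorem ncard_hook (hm : 4 ≤ m) : (hook m).ncard = 2 * m - 1 := by
  set h : ℕ → ℕ := fun i => if i = 0 then m else if i = 1 then m - 3 else 1
  have hrows : hook m = {v | v.1 < 4 ∧ 0 ≤ v.2 ∧ v.2 < h v.1} := by
    ext v
    simp only [hook, gridBox, Set.mem_ofPred_eq]
    grind
  rw [hrows, ncard_setOf_rows (l := fun _ => 0)]
  simp only [Finset.sum_range_succ, Finset.range_zero, Finset.sum_empty, h]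
  grind

theorem sub_hook_mem_strongConvexitySpectrum (hm : 4 ≤ m) :
    4 * m - (2 * m - 1) ∈ strongConvexitySpectrum (gridGraph 4 m) := by
  have hcard := ncard_hook hm
  have hbox : hook m ⊆ gridBox 4 m := Set.sep_subset _ _
  rw [← hcard]
  refine sub_ncard_mem_strongConvexitySpectrum_gridGraph hbox
    ⟨(0, 0), ⟨by lia, by lia⟩, .inl rfl⟩ (dirReachable_hookArc hm) (dConvex_diff_hook hm)
    fun T hTbox hT hTS => ?_
  by_cases hTS' : T ⊆ hook m ∪ {(1, 1), (2, 1)}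
  · have hTcard : T.ncard ≤ (hook m).ncard + 2 := calc
      T.ncard ≤ (hook m ∪ {(1, 1), (2, 1)}).ncard :=
        Set.ncard_le_ncard hTS' ((finite_gridBox.subset hbox).union (Set.toFinite _))
      _ ≤ (hook m).ncard + ({(1, 1), (2, 1)} : Set (ℕ × ℕ)).ncard := Set.ncard_union_le _ _
      _ = (hook m).ncard + 2 := by rw [Set.ncard_pair (by simp)]
    right
    lia
  · exact .inl (gridBox_subset_of_hookArc hm hTbox hT hTS hTS')

/-! ### The spectrum of the grid -/

theorem sub_mem_strongConvexitySpectrum_of_le (hn : 4 ≤ n) (hm : 4 ≤ m) (hmk : m ≤ k)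
    (hk : k ≤ 2 * m - 1) : n * m - k ∈ strongConvexitySpectrum (gridGraph n m) := by
  obtain hk2 | rfl : k ≤ 2 * m - 2 ∨ k = 2 * m - 1 := by lia
  · convert sub_staircase_mem_strongConvexitySpectrum (q := 2 * m - k) (r := m) hn (by lia)
      (by lia) le_rfl (by lia) using 2
    lia
  obtain rfl | hn5 : n = 4 ∨ 5 ≤ n := by lia
  · exact sub_hook_mem_strongConvexitySpectrum hm
  · convert sub_staircase_mem_strongConvexitySpectrum (m := m) (q := 2) (r := m - 1) hn
      le_rfl (by lia) (by lia) (fun _ => hn5) using 2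
    lia

theorem sub_mem_strongConvexitySpectrum_gridGraph (hn : 4 ≤ n) (hm : 4 ≤ m) (h6 : 6 ≤ k)
    (hk : k ≤ 2 * m - 1) : n * m - k ∈ strongConvexitySpectrum (gridGraph n m) := by
  rcases le_or_gt m k with hmk | hkm
  · exact sub_mem_strongConvexitySpectrum_of_le hn hm hmk hk
  · convert sub_cornerBlock_mem_strongConvexitySpectrum (a := k - 3) (m := m) hn (by lia) (by lia)
      using 2
    lia

theorem sub_mem_strongConvexitySpectrum_swap
    (h : m * n - k ∈ strongConvexitySpectrum (gridGraph m n)) :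
    n * m - k ∈ strongConvexitySpectrum (gridGraph n m) := by
  rw [mul_comm]
  exact strongConvexitySpectrum_subset_of_iso (SimpleGraph.boxProdComm _ _) h

end Grid

/-- Realizable values `nm - k` for `6 ≤ k ≤ 2·max{n,m} - 1` in the strong convexity
spectrum of `P_n □ P_m`; moreover `nm - 5` is realizable when `m = 4` or `n = 4`. -/
theorem nm_sub_k_mem_strongConvexitySpectrum_grid (n m : ℕ) (hn : 4 ≤ n) (hm : 4 ≤ m) :
    (∀ k : ℕ, 6 ≤ k → k ≤ 2 * max n m - 1 →
      n * m - k ∈ strongConvexitySpectrum (gridGraph n m)) ∧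
    ((m = 4 ∨ n = 4) → n * m - 5 ∈ strongConvexitySpectrum (gridGraph n m)) := by
  refine ⟨fun k h6 hk => ?_, ?_⟩
  · rcases le_total n m with h | h
    · rw [max_eq_right h] at hk
      exact sub_mem_strongConvexitySpectrum_gridGraph hn hm h6 hk
    · rw [max_eq_left h] at hk
      exact sub_mem_strongConvexitySpectrum_swap
        (sub_mem_strongConvexitySpectrum_gridGraph hm hn h6 hk)
  · rintro (rfl | rfl)
    · exact sub_mem_strongConvexitySpectrum_of_le hn hm (by decide) (by decide)
    · exact sub_mem_strongConvexitySpectrum_swap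
        (sub_mem_strongConvexitySpectrum_of_le hm hn (by decide) (by decide))
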